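/- arXiv:2208.01423 — 7 statements merged into one kernel-verified Lean document; each statement's English description precedes it below -/
import Mathlib

section
/- Let X = EuclideanSpace ℝ (Fin n), let V be a nonempty set of impulse values in (Fin q → ℝ), let v : X → ℝ be bounded and uniformly continuous, let g : X → (Fin q → ℝ) → X be such that x ↦ g(x, η) is K-Lipschitz for every η ∈ V (with a constant K independent of η), and let χ : X → (Fin q → ℝ) → ℝ be nonnegative and such that x ↦ χ(x, η) is K'-Lipschitz for every η ∈ V (with K' independent of η). Then the function x ↦ inf_{η ∈ V} [ v(x + g(x, η)) + χ(x, η) ] is uniformly continuous on X. -/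
open scoped BigOperators

/-!
Taking infima is non-expansive for the supremum distance on families of reals bounded below, so the
pointwise infimum of a uniformly equicontinuous family is uniformly continuous. The family
`x ↦ v (x + g x η) + χ x η`, indexed by `η`, is uniformly equicontinuous because a single modulus of
continuity of `v` serves all the shifted arguments `x + g x η` at once.
-/

open Set

section ciInf

variable {α : Type*} {ι : Sort*} [Nonempty ι]

theorem ciInf_le_ciInf_add [AddGroup α] [ConditionallyCompleteLattice α] [AddRightMono α]
    {f g : ι → α} {c : α} (hf : BddBelow (range f)) (h : ∀ i, f i ≤ g i + c) :
    ⨅ i, f i ≤ (⨅ i, g i) + c :=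
  sub_le_iff_le_add.1 <| le_ciInf fun i ↦ sub_le_iff_le_add.2 <| ciInf_le_of_le hf i (h i)

theorem abs_ciInf_sub_ciInf_le [AddCommGroup α] [ConditionallyCompleteLinearOrder α]
    [IsOrderedAddMonoid α] {f g : ι → α} {c : α} (hf : BddBelow (range f))
    (hg : BddBelow (range g)) (h : ∀ i, |f i - g i| ≤ c) :
    |(⨅ i, f i) - ⨅ i, g i| ≤ c :=
  abs_sub_le_iff.2
    ⟨sub_le_iff_le_add'.2 <| ciInf_le_ciInf_add hf fun i ↦
        sub_le_iff_le_add'.1 (abs_sub_le_iff.1 (h i)).1,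
      sub_le_iff_le_add'.2 <| ciInf_le_ciInf_add hg fun i ↦
        sub_le_iff_le_add'.1 (abs_sub_le_iff.1 (h i)).2⟩

end ciInf

section UniformEquicontinuous

variable {ι β α : Type*} [UniformSpace β]

theorem uniformEquicontinuous_const [UniformSpace α] {f : β → α} (hf : UniformContinuous f) :
    UniformEquicontinuous fun _ : ι ↦ f :=
  fun _ hU ↦ (hf.eventually_mem hU).mono fun _ hxy _ ↦ hxy

theorem uniformEquicontinuous_comp_left [UniformSpace α] {γ : Type*} [UniformSpace γ]
    {φ : α → γ} {F : ι → β → α} (hφ : UniformContinuous φ) (hF : UniformEquicontinuous F) :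
    UniformEquicontinuous fun i x ↦ φ (F i x) :=
  fun _ hU ↦ hF _ (hφ hU)

theorem uniformEquicontinuous_add [UniformSpace α] [AddGroup α] [IsUniformAddGroup α]
    {F G : ι → β → α} (hF : UniformEquicontinuous F) (hG : UniformEquicontinuous G) :
    UniformEquicontinuous fun i x ↦ F i x + G i x := by
  rw [uniformEquicontinuous_iff_uniformContinuous] at hF hG ⊢
  exact hF.add hG

theorem uniformEquicontinuous_of_norm_sub_le {E F : Type*} [SeminormedAddCommGroup E]
    [SeminormedAddCommGroup F] {f : ι → E → F} {K : ℝ}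
    (hf : ∀ i x y, ‖f i x - f i y‖ ≤ K * ‖x - y‖) : UniformEquicontinuous f :=
  LipschitzWith.uniformEquicontinuous f K.toNNReal fun i ↦
    LipschitzWith.of_dist_le' <| by simpa only [dist_eq_norm] using hf i

theorem uniformContinuous_iInf_of_uniformEquicontinuous [Nonempty ι] {F : ι → β → ℝ}
    (hF : UniformEquicontinuous F) (hbdd : ∀ x, BddBelow (range (F · x))) :
    UniformContinuous fun x ↦ ⨅ i, F i x := by
  refine Metric.uniformity_basis_dist_le.tendsto_right_iff.2 fun ε hε ↦ ?_
  filter_upwards [Metric.uniformEquicontinuous_iff_right.1 hF ε hε] with ⟨x, y⟩ hxy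
  exact abs_ciInf_sub_ciInf_le (hbdd x) (hbdd y) fun i ↦ (hxy i).le

end UniformEquicontinuous

theorem inf_nonlocal_operator_uniformContinuous_general {ι X : Type*} [Nonempty ι]
    [UniformSpace X] [AddGroup X] [IsUniformAddGroup X] {v : X → ℝ} {g : ι → X → X}
    {χ : ι → X → ℝ} (hv : UniformContinuous v) (hg : UniformEquicontinuous g)
    (hχ : UniformEquicontinuous χ)
    (hbdd : ∀ x, BddBelow (range fun η ↦ v (x + g η x) + χ η x)) :
    UniformContinuous fun x ↦ ⨅ η, (v (x + g η x) + χ η x) := by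
  have hshift : UniformEquicontinuous fun η x ↦ x + g η x :=
    uniformEquicontinuous_add (uniformEquicontinuous_const uniformContinuous_id) hg
  have hcost : UniformEquicontinuous fun η x ↦ v (x + g η x) + χ η x :=
    uniformEquicontinuous_add (uniformEquicontinuous_comp_left hv hshift) hχ
  exact uniformContinuous_iInf_of_uniformEquicontinuous hcost hbdd

/-- Infimum half of Proposition 2.5: the minimum non-local cost operator
`x ↦ inf_{η ∈ V} [v (x + g x η) + χ x η]` applied to a bounded uniformly continuous
function `v` is uniformly continuous, provided `g` and `χ` are Lipschitz in the state
uniformly in the impulse value and `χ` is nonnegative. -/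
theorem inf_nonlocal_operator_uniformContinuous
    (n q : ℕ) (V : Set (Fin q → ℝ)) (hV : V.Nonempty)
    (v : EuclideanSpace ℝ (Fin n) → ℝ)
    (M : ℝ) (hvb : ∀ x, |v x| ≤ M) (hvu : UniformContinuous v)
    (g : EuclideanSpace ℝ (Fin n) → (Fin q → ℝ) → EuclideanSpace ℝ (Fin n))
    (K : ℝ) (hK : 0 ≤ K)
    (hg : ∀ η ∈ V, ∀ x₁ x₂ : EuclideanSpace ℝ (Fin n),
      ‖g x₁ η - g x₂ η‖ ≤ K * ‖x₁ - x₂‖)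
    (χ : EuclideanSpace ℝ (Fin n) → (Fin q → ℝ) → ℝ)
    (hχ : ∀ x η, 0 ≤ χ x η)
    (K' : ℝ) (hK' : 0 ≤ K')
    (hχL : ∀ η ∈ V, ∀ x₁ x₂ : EuclideanSpace ℝ (Fin n),
      |χ x₁ η - χ x₂ η| ≤ K' * ‖x₁ - x₂‖) :
    UniformContinuous fun x : EuclideanSpace ℝ (Fin n) =>
      ⨅ η : V, (v (x + g x (η : Fin q → ℝ)) + χ x (η : Fin q → ℝ)) := by
  have : Nonempty V := hV.to_subtype
  exact inf_nonlocal_operator_uniformContinuous_general hvu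
    (uniformEquicontinuous_of_norm_sub_le fun η : V ↦ hg η η.2)
    (uniformEquicontinuous_of_norm_sub_le fun η : V ↦ hχL η η.2)
    fun x ↦ ⟨-M, forall_mem_range.2 fun η ↦
      by linarith [neg_le_of_abs_le (hvb (x + g x η)), hχ x η]⟩
end

section
/- Let X = EuclideanSpace ℝ (Fin n), let b : ℝ → X → (Fin l → ℝ) → X satisfy ‖b(s, x, θ)‖ ≤ M for all s, x, θ, and suppose that for every s and θ the map x ↦ b(s, x, θ) is C-Lipschitz, where M > 0 and C ≥ 0. Let θ : ℝ → (Fin l → ℝ) be a control and t ≤ t' ≤ T. Suppose y₁ : ℝ → X is continuous on [t, T] with derivative b(s, y₁(s), θ(s)) at every s ∈ [t, T] (derivative within [t, T]) and y₁(t) = x, and y₂ : ℝ → X is continuous on [t', T] with derivative b(s, y₂(s), θ(s)) at every s ∈ [t', T] (derivative within [t', T]) and y₂(t') = x'. Then for every s ∈ [t', T], ‖y₂(s) − y₁(s)‖ ≤ exp(C·(T − t')) · ( ‖x' − x‖ + M·(t' − t) ). -/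
/-!
Fixing the control turns the drift into a time-dependent vector field, of which both trajectories
are integral curves. Since the field is bounded by `M` along the first one, that trajectory moves by
at most `M * (t' - t)` before time `t'`, so at time `t'` the two are at most
`‖x' - x‖ + M * (t' - t)` apart; Grönwall's inequality propagates this gap.
-/

open Set
open scoped NNReal

section IntegralCurve

variable {E : Type*} [NormedAddCommGroup E] [NormedSpace ℝ E] {v : ℝ → E → E} {a b : ℝ}

lemma hasDerivWithinAt_Ici_of_isIntegralCurveOn_Icc {γ : ℝ → E}
    (hγ : IsIntegralCurveOn γ v (Icc a b)) {s : ℝ} (hs : s ∈ Ico a b) :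
    HasDerivWithinAt γ (v s (γ s)) (Ici s) s :=
  (hγ s (Ico_subset_Icc_self hs)).mono_of_mem_nhdsWithin (Icc_mem_nhdsGE_of_mem hs)

lemma dist_le_dist_mul_exp_of_isIntegralCurveOn {γ₁ γ₂ : ℝ → E} {K : ℝ≥0}
    (hv : ∀ s ∈ Ico a b, LipschitzWith K (v s))
    (hγ₁ : IsIntegralCurveOn γ₁ v (Icc a b)) (hγ₂ : IsIntegralCurveOn γ₂ v (Icc a b))
    {s : ℝ} (hs : s ∈ Icc a b) :
    dist (γ₁ s) (γ₂ s) ≤ dist (γ₁ a) (γ₂ a) * Real.exp (K * (s - a)) :=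
  dist_le_of_trajectories_ODE_of_mem (fun r hr ↦ (hv r hr).lipschitzOnWith)
    hγ₁.continuousOn (fun _ ↦ hasDerivWithinAt_Ici_of_isIntegralCurveOn_Icc hγ₁)
    (fun _ _ ↦ mem_univ _)
    hγ₂.continuousOn (fun _ ↦ hasDerivWithinAt_Ici_of_isIntegralCurveOn_Icc hγ₂)
    (fun _ _ ↦ mem_univ _) le_rfl s hs

theorem trajectory_estimate_two_general {y₁ y₂ : ℝ → E} {M : ℝ} {K : ℝ≥0} {t t' T : ℝ}
    (htt' : t ≤ t')
    (hy₁ : IsIntegralCurveOn y₁ v (Icc t T)) (hy₂ : IsIntegralCurveOn y₂ v (Icc t' T))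
    (hbound : ∀ s ∈ Ico t t', ‖v s (y₁ s)‖ ≤ M)
    (hLip : ∀ s ∈ Ico t' T, LipschitzWith K (v s)) {s : ℝ} (hs : s ∈ Icc t' T) :
    ‖y₂ s - y₁ s‖ ≤ Real.exp (K * (s - t')) * (‖y₂ t' - y₁ t‖ + M * (t' - t)) := by
  have displacement : ‖y₁ t' - y₁ t‖ ≤ M * (t' - t) :=
    norm_image_sub_le_of_norm_deriv_le_segment'
      (hy₁.mono (Icc_subset_Icc_right (hs.1.trans hs.2))) hbound t' (right_mem_Icc.2 htt')
  have gap : ‖y₂ t' - y₁ t'‖ ≤ ‖y₂ t' - y₁ t‖ + M * (t' - t) := calc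
    ‖y₂ t' - y₁ t'‖ ≤ ‖y₂ t' - y₁ t‖ + ‖y₁ t - y₁ t'‖ := norm_sub_le_norm_sub_add_norm_sub ..
    _ ≤ ‖y₂ t' - y₁ t‖ + M * (t' - t) := by rw [norm_sub_rev (y₁ t)]; gcongr
  have gronwall : ‖y₂ s - y₁ s‖ ≤ ‖y₂ t' - y₁ t'‖ * Real.exp (K * (s - t')) := by
    simpa only [dist_eq_norm] using dist_le_dist_mul_exp_of_isIntegralCurveOn hLip hy₂
      (hy₁.mono (Icc_subset_Icc_left htt')) hs
  calc
    ‖y₂ s - y₁ s‖ ≤ ‖y₂ t' - y₁ t'‖ * Real.exp (K * (s - t')) := gronwall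
    _ = Real.exp (K * (s - t')) * ‖y₂ t' - y₁ t'‖ := mul_comm _ _
    _ ≤ Real.exp (K * (s - t')) * (‖y₂ t' - y₁ t‖ + M * (t' - t)) := by gcongr

end IntegralCurve

/-- Trajectory estimate (ii) of Proposition 2.1: for two trajectories of the controlled
ODE `ẏ(s) = b(s, y(s), θ(s))`, with drift bounded by `M` and `C`-Lipschitz in the state,
started respectively at `x` at time `t` and at `x'` at time `t' ∈ [t, T]`, one has
`‖y₂ s - y₁ s‖ ≤ exp (C * (T - t')) * (‖x' - x‖ + M * (t' - t))` for all `s ∈ [t', T]`. -/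
theorem trajectory_estimate_two
    (n l : ℕ)
    (b : ℝ → EuclideanSpace ℝ (Fin n) → (Fin l → ℝ) → EuclideanSpace ℝ (Fin n))
    (M C : ℝ) (hM : 0 < M) (hC : 0 ≤ C)
    (hb : ∀ (s : ℝ) (x : EuclideanSpace ℝ (Fin n)) (θ : Fin l → ℝ), ‖b s x θ‖ ≤ M)
    (hbLip : ∀ (s : ℝ) (θ : Fin l → ℝ) (x₁ x₂ : EuclideanSpace ℝ (Fin n)),
      ‖b s x₁ θ - b s x₂ θ‖ ≤ C * ‖x₁ - x₂‖)
    (θ : ℝ → Fin l → ℝ) (t t' T : ℝ) (htt' : t ≤ t') (ht'T : t' ≤ T)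
    (y₁ y₂ : ℝ → EuclideanSpace ℝ (Fin n)) (x x' : EuclideanSpace ℝ (Fin n))
    (hcont₁ : ContinuousOn y₁ (Set.Icc t T))
    (hderiv₁ : ∀ s ∈ Set.Icc t T, HasDerivWithinAt y₁ (b s (y₁ s) (θ s)) (Set.Icc t T) s)
    (hinit₁ : y₁ t = x)
    (hcont₂ : ContinuousOn y₂ (Set.Icc t' T))
    (hderiv₂ : ∀ s ∈ Set.Icc t' T, HasDerivWithinAt y₂ (b s (y₂ s) (θ s)) (Set.Icc t' T) s)
    (hinit₂ : y₂ t' = x') :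
    ∀ s ∈ Set.Icc t' T,
      ‖y₂ s - y₁ s‖ ≤ Real.exp (C * (T - t')) * (‖x' - x‖ + M * (t' - t)) := by
  intro s hs
  lift C to ℝ≥0 using hC
  subst hinit₁ hinit₂
  exact (trajectory_estimate_two_general (v := fun r z ↦ b r z (θ r)) htt' hderiv₁ hderiv₂
    (fun r _ ↦ hb r _ _)
    (fun r _ ↦ lipschitzWith_iff_norm_sub_le.2 (hbLip r (θ r))) hs).trans (by gcongr; exact hs.2)
end

section
/- Let v₁, v₂ : ℝ → X → ℝ be bounded functions and let K ≥ 0 be such that |v₁(s, y) − v₂(s, y)| ≤ K for all (s, y). Then for every (s, y), |(F v₁)(s, y) − (F v₂)(s, y)| ≤ max(1 − λh, Φh) · K. In particular, F is a contraction on the space of bounded functions with contraction constant max(1 − λh, Φh) < 1. -/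
open scoped BigOperators

/-- The discrete approximation operator `F` of the approximate HJBI equation:
`(F v)(s, y) = min (max (sup_θ [(1-λh)·v(s+h, y + h·b(s,y,θ)) + h·f(s,y,θ)],
Φh · sup_ξ [v(s, y + g_ξ(s,y,ξ)) - c(s,y,ξ)]), Φh · inf_η [v(s, y + g_η(s,y,η)) + χ(s,y,η)])`. -/
noncomputable def approxOp (n l p q : ℕ) (lam h Φh : ℝ)
    (b : ℝ → EuclideanSpace ℝ (Fin n) → (Fin l → ℝ) → EuclideanSpace ℝ (Fin n))
    (f : ℝ → EuclideanSpace ℝ (Fin n) → (Fin l → ℝ) → ℝ)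
    (gξ : ℝ → EuclideanSpace ℝ (Fin n) → (Fin p → ℝ) → EuclideanSpace ℝ (Fin n))
    (gη : ℝ → EuclideanSpace ℝ (Fin n) → (Fin q → ℝ) → EuclideanSpace ℝ (Fin n))
    (c : ℝ → EuclideanSpace ℝ (Fin n) → (Fin p → ℝ) → ℝ)
    (χ : ℝ → EuclideanSpace ℝ (Fin n) → (Fin q → ℝ) → ℝ)
    (v : ℝ → EuclideanSpace ℝ (Fin n) → ℝ) :
    ℝ → EuclideanSpace ℝ (Fin n) → ℝ :=
  fun s y =>
    min
      (max
        (⨆ θ : Fin l → ℝ, ((1 - lam * h) * v (s + h) (y + h • b s y θ) + h * f s y θ))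
        (Φh * ⨆ ξ : Fin p → ℝ, (v s (y + gξ s y ξ) - c s y ξ)))
      (Φh * ⨅ η : Fin q → ℝ, (v s (y + gη s y η) + χ s y η))

/-!
Suprema, infima, `max` and `min` are nonexpansive for the uniform distance. Inside each of the three
extrema the running reward or the impulse cost does not depend on `v` and cancels in the difference,
so the continuation branch contracts by `1 - λh` and both impulse branches contract by `Φh`.
Time plays no special role: the pair `(s, y)` is just a state.
-/

open Set Function

section ConditionallyComplete

variable {ι : Sort*} {α : Type*} [Nonempty ι] [AddCommGroup α]

section Lattice

variable [ConditionallyCompleteLattice α] [IsOrderedAddMonoid α] {u w : ι → α} {C : α}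

theorem ciSup_le_ciSup_add_of_le (hw : BddAbove (range w)) (h : ∀ i, u i ≤ w i + C) :
    ⨆ i, u i ≤ (⨆ i, w i) + C :=
  ciSup_le fun i => (h i).trans (by gcongr; exact le_ciSup hw i)

theorem ciInf_le_ciInf_add_of_le (hu : BddBelow (range u)) (h : ∀ i, u i ≤ w i + C) :
    ⨅ i, u i ≤ (⨅ i, w i) + C :=
  sub_le_iff_le_add.1 <| le_ciInf fun i => sub_le_iff_le_add.2 <| (ciInf_le hu i).trans (h i)

end Lattice

variable [ConditionallyCompleteLinearOrder α] [IsOrderedAddMonoid α] {u w : ι → α} {C : α}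

theorem abs_ciSup_sub_ciSup_le (hu : BddAbove (range u)) (h : ∀ i, |u i - w i| ≤ C) :
    |(⨆ i, u i) - ⨆ i, w i| ≤ C := by
  have u_le i : u i ≤ w i + C := sub_le_iff_le_add'.1 (abs_sub_le_iff.1 (h i)).1
  have w_le i : w i ≤ u i + C := sub_le_iff_le_add'.1 (abs_sub_le_iff.1 (h i)).2
  have hw : BddAbove (range w) := by
    obtain ⟨B, hB⟩ := hu
    exact ⟨B + C, forall_mem_range.2 fun i => (w_le i).trans (by gcongr; exact hB ⟨i, rfl⟩)⟩
  exact abs_sub_le_iff.2 ⟨sub_le_iff_le_add'.2 (ciSup_le_ciSup_add_of_le hw u_le),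
    sub_le_iff_le_add'.2 (ciSup_le_ciSup_add_of_le hu w_le)⟩

theorem abs_ciInf_sub_ciInf_le_s8 (hu : BddBelow (range u)) (h : ∀ i, |u i - w i| ≤ C) :
    |(⨅ i, u i) - ⨅ i, w i| ≤ C := by
  have u_le i : u i ≤ w i + C := sub_le_iff_le_add'.1 (abs_sub_le_iff.1 (h i)).1
  have w_le i : w i ≤ u i + C := sub_le_iff_le_add'.1 (abs_sub_le_iff.1 (h i)).2
  have hw : BddBelow (range w) := by
    obtain ⟨B, hB⟩ := hu
    exact ⟨B - C, forall_mem_range.2 fun i =>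
      sub_le_iff_le_add.2 ((hB ⟨i, rfl⟩).trans (u_le i))⟩
  exact abs_sub_le_iff.2 ⟨sub_le_iff_le_add'.2 (ciInf_le_ciInf_add_of_le hu u_le),
    sub_le_iff_le_add'.2 (ciInf_le_ciInf_add_of_le hw w_le)⟩

end ConditionallyComplete

theorem abs_mul_sub_mul_le_of_nonneg {R : Type*} [Ring R] [LinearOrder R]
    [IsOrderedRing R] {a x y C : R} (ha : 0 ≤ a) (h : |x - y| ≤ C) : |a * x - a * y| ≤ a * C := by
  rw [← mul_sub, abs_mul, abs_of_nonneg ha]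
  gcongr

section ImpulseGame

variable {S Θ Ξ Η : Type*}

/-- The one-step Bellman operator of a control problem with discount factor `ρ`, transition map `T`
and running reward `r`. -/
noncomputable def bellmanOp (ρ : ℝ) (T : S → Θ → S) (r : S → Θ → ℝ) (v : S → ℝ) (x : S) : ℝ :=
  ⨆ θ, (ρ * v (T x θ) + r x θ)

/-- The best value the maximizing player can reach by an impulse moving `x` to `G x ξ` at
cost `c x ξ`. -/
noncomputable def supImpulseOp (G : S → Ξ → S) (c : S → Ξ → ℝ) (v : S → ℝ) (x : S) : ℝ :=
  ⨆ ξ, (v (G x ξ) - c x ξ)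

/-- The best value the minimizing player can reach by an impulse moving `x` to `H x η`, for which
that player pays `χ x η` to the opponent. -/
noncomputable def infImpulseOp (H : S → Η → S) (χ : S → Η → ℝ) (v : S → ℝ) (x : S) : ℝ :=
  ⨅ η, (v (H x η) + χ x η)

/-- The dynamic programming operator of a zero-sum game with impulses on an arbitrary state space:
the maximizing player controls continuously or by impulses, the minimizing player by impulses only.
The factor `ρ` discounts a continuation step and `κ` an impulse. An extremum that is infinite takes
the junk value `0`. -/
noncomputable def impulseGameOp (ρ κ : ℝ) (T : S → Θ → S) (r : S → Θ → ℝ) (G : S → Ξ → S)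
    (c : S → Ξ → ℝ) (H : S → Η → S) (χ : S → Η → ℝ) (v : S → ℝ) (x : S) : ℝ :=
  min (max (bellmanOp ρ T r v x) (κ * supImpulseOp G c v x)) (κ * infImpulseOp H χ v x)

variable {ρ κ K : ℝ} {T : S → Θ → S} {r : S → Θ → ℝ} {G : S → Ξ → S} {c : S → Ξ → ℝ}
  {H : S → Η → S} {χ : S → Η → ℝ} {v₁ v₂ : S → ℝ} {x : S}

theorem abs_bellmanOp_sub_le [Nonempty Θ] (hρ : 0 ≤ ρ) (hr : BddAbove (range (r x)))
    (hv₁ : BddAbove (range v₁)) (hdist : ∀ x, |v₁ x - v₂ x| ≤ K) :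
    |bellmanOp ρ T r v₁ x - bellmanOp ρ T r v₂ x| ≤ ρ * K := by
  have hbdd : BddAbove (range fun θ => ρ * v₁ (T x θ) + r x θ) :=
    ((hv₁.range_comp_right (T x)).range_comp_left (monotone_mul_left_of_nonneg hρ)).range_add hr
  refine abs_ciSup_sub_ciSup_le hbdd fun θ => ?_
  rw [add_sub_add_right_eq_sub]
  exact abs_mul_sub_mul_le_of_nonneg hρ (hdist _)

theorem abs_supImpulseOp_sub_le [Nonempty Ξ] (hc : BddBelow (range (c x)))
    (hv₁ : BddAbove (range v₁)) (hdist : ∀ x, |v₁ x - v₂ x| ≤ K) :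
    |supImpulseOp G c v₁ x - supImpulseOp G c v₂ x| ≤ K := by
  have hbdd : BddAbove (range fun ξ => v₁ (G x ξ) - c x ξ) := by
    simpa only [sub_eq_add_neg, comp_apply] using
      (hv₁.range_comp_right (G x)).range_add hc.range_neg
  refine abs_ciSup_sub_ciSup_le hbdd fun ξ => ?_
  rw [sub_sub_sub_cancel_right]
  exact hdist _

theorem abs_infImpulseOp_sub_le [Nonempty Η] (hχ : BddBelow (range (χ x)))
    (hv₁ : BddBelow (range v₁)) (hdist : ∀ x, |v₁ x - v₂ x| ≤ K) :
    |infImpulseOp H χ v₁ x - infImpulseOp H χ v₂ x| ≤ K := by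
  have hbdd : BddBelow (range fun η => v₁ (H x η) + χ x η) :=
    BddBelow.range_add (hv₁.mono (range_comp_subset_range (H x) v₁)) hχ
  refine abs_ciInf_sub_ciInf_le_s8 hbdd fun η => ?_
  rw [add_sub_add_right_eq_sub]
  exact hdist _

theorem approxOp_contraction_general [Nonempty Θ] [Nonempty Ξ] [Nonempty Η]
    (hρ : 0 ≤ ρ) (hρ' : ρ < 1) (hκ : 0 ≤ κ) (hκ' : κ < 1)
    (hr : ∀ x, BddAbove (range (r x))) (hc : ∀ x, BddBelow (range (c x)))
    (hχ : ∀ x, BddBelow (range (χ x)))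
    (hv₁ : BddAbove (range v₁)) (hv₁' : BddBelow (range v₁)) (hdist : ∀ x, |v₁ x - v₂ x| ≤ K) :
    (∀ x, |impulseGameOp ρ κ T r G c H χ v₁ x - impulseGameOp ρ κ T r G c H χ v₂ x| ≤
        max ρ κ * K) ∧
      max ρ κ < 1 := by
  refine ⟨fun x => ?_, max_lt hρ' hκ'⟩
  have hK : 0 ≤ K := (abs_nonneg _).trans (hdist x)
  have hρK : ρ * K ≤ max ρ κ * K := by gcongr; exact le_max_left ρ κ
  have hκK : κ * K ≤ max ρ κ * K := by gcongr; exact le_max_right ρ κ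
  have hcont := abs_bellmanOp_sub_le (T := T) hρ (hr x) hv₁ hdist
  have hsup := abs_mul_sub_mul_le_of_nonneg hκ (abs_supImpulseOp_sub_le (G := G) (hc x) hv₁ hdist)
  have hinf := abs_mul_sub_mul_le_of_nonneg hκ (abs_infImpulseOp_sub_le (H := H) (hχ x) hv₁' hdist)
  exact (abs_min_sub_min_le_max _ _ _ _).trans <| max_le
    ((abs_max_sub_max_le_max _ _ _ _).trans <| max_le (hcont.trans hρK) (hsup.trans hκK))
    (hinf.trans hκK)

end ImpulseGame

theorem approxOp_eq_impulseGameOp {n l p q : ℕ} (lam h Φh : ℝ)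
    (b : ℝ → EuclideanSpace ℝ (Fin n) → (Fin l → ℝ) → EuclideanSpace ℝ (Fin n))
    (f : ℝ → EuclideanSpace ℝ (Fin n) → (Fin l → ℝ) → ℝ)
    (gξ : ℝ → EuclideanSpace ℝ (Fin n) → (Fin p → ℝ) → EuclideanSpace ℝ (Fin n))
    (gη : ℝ → EuclideanSpace ℝ (Fin n) → (Fin q → ℝ) → EuclideanSpace ℝ (Fin n))
    (c : ℝ → EuclideanSpace ℝ (Fin n) → (Fin p → ℝ) → ℝ)
    (χ : ℝ → EuclideanSpace ℝ (Fin n) → (Fin q → ℝ) → ℝ)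
    (v : ℝ → EuclideanSpace ℝ (Fin n) → ℝ) (s : ℝ) (y : EuclideanSpace ℝ (Fin n)) :
    approxOp n l p q lam h Φh b f gξ gη c χ v s y =
      impulseGameOp (1 - lam * h) Φh (fun x θ => (x.1 + h, x.2 + h • b x.1 x.2 θ))
        (fun x θ => h * f x.1 x.2 θ) (fun x ξ => (x.1, x.2 + gξ x.1 x.2 ξ)) (uncurry c)
        (fun x η => (x.1, x.2 + gη x.1 x.2 η)) (uncurry χ) (uncurry v) (s, y) :=
  rfl

/-- If `v₁` and `v₂` are bounded with `|v₁ - v₂| ≤ K` everywhere, then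
`|F v₁ - F v₂| ≤ max (1 - λh) Φh · K` everywhere; in particular `F` is a contraction
on bounded functions with contraction constant `max (1 - λh) Φh < 1`. -/
theorem approxOp_contraction
    (n l p q : ℕ) (lam h Φh : ℝ)
    (hlam : 0 < lam) (hh : 0 < h) (hh' : h < 1 / lam) (hΦ : 0 < Φh) (hΦ' : Φh < 1)
    (b : ℝ → EuclideanSpace ℝ (Fin n) → (Fin l → ℝ) → EuclideanSpace ℝ (Fin n))
    (f : ℝ → EuclideanSpace ℝ (Fin n) → (Fin l → ℝ) → ℝ)
    (gξ : ℝ → EuclideanSpace ℝ (Fin n) → (Fin p → ℝ) → EuclideanSpace ℝ (Fin n))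
    (gη : ℝ → EuclideanSpace ℝ (Fin n) → (Fin q → ℝ) → EuclideanSpace ℝ (Fin n))
    (c : ℝ → EuclideanSpace ℝ (Fin n) → (Fin p → ℝ) → ℝ)
    (χ : ℝ → EuclideanSpace ℝ (Fin n) → (Fin q → ℝ) → ℝ)
    (Mb : ℝ) (hbB : ∀ s y θ, ‖b s y θ‖ ≤ Mb)
    (Mf : ℝ) (hfB : ∀ s y θ, |f s y θ| ≤ Mf)
    (hc : ∀ s y ξ, 0 ≤ c s y ξ) (hχ : ∀ s y η, 0 ≤ χ s y η)
    (v₁ v₂ : ℝ → EuclideanSpace ℝ (Fin n) → ℝ)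
    (M₁ : ℝ) (hv₁ : ∀ s y, |v₁ s y| ≤ M₁)
    (M₂ : ℝ) (hv₂ : ∀ s y, |v₂ s y| ≤ M₂)
    (K : ℝ) (hK : 0 ≤ K) (hdist : ∀ s y, |v₁ s y - v₂ s y| ≤ K) :
    (∀ s y, |approxOp n l p q lam h Φh b f gξ gη c χ v₁ s y -
        approxOp n l p q lam h Φh b f gξ gη c χ v₂ s y| ≤ max (1 - lam * h) Φh * K) ∧
      max (1 - lam * h) Φh < 1 := by
  have hlh : lam * h < 1 := (lt_div_iff₀' hlam).1 hh'
  have hr (x : ℝ × EuclideanSpace ℝ (Fin n)) : BddAbove (range fun θ => h * f x.1 x.2 θ) :=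
    ⟨h * Mf, forall_mem_range.2 fun θ => by gcongr; exact (abs_le.1 (hfB ..)).2⟩
  have hc' x : BddBelow (range (uncurry c x)) := ⟨0, forall_mem_range.2 (hc x.1 x.2)⟩
  have hχ' x : BddBelow (range (uncurry χ x)) := ⟨0, forall_mem_range.2 (hχ x.1 x.2)⟩
  have hv_above : BddAbove (range (uncurry v₁)) :=
    ⟨M₁, forall_mem_range.2 fun x => (abs_le.1 (hv₁ x.1 x.2)).2⟩
  have hv_below : BddBelow (range (uncurry v₁)) :=
    ⟨-M₁, forall_mem_range.2 fun x => (abs_le.1 (hv₁ x.1 x.2)).1⟩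
  have hdist' x : |uncurry v₁ x - uncurry v₂ x| ≤ K := hdist x.1 x.2
  simp only [approxOp_eq_impulseGameOp]
  exact (approxOp_contraction_general (sub_nonneg.2 hlh.le) (sub_lt_self 1 (mul_pos hlam hh))
    hΦ.le hΦ' hr hc' hχ' hv_above hv_below hdist').imp_left fun hF s y => hF (s, y)
end

section
/- Fix T ∈ ℝ and a bounded function G : X → ℝ, and define the operator F_G on bounded functions v : ℝ → X → ℝ by (F_G v)(s, y) = G(y) if s ≥ T, and (F_G v)(s, y) = (F v)(s, y) if s < T. Then there exists a unique bounded function v_h : ℝ → X → ℝ such that v_h(s, y) = (F_G v_h)(s, y) for all (s, y); that is, v_h(T', y) = G(y) for every T' ≥ T and y, and v_h satisfies the approximate Hamilton-Jacobi-Bellman-Isaacs fixed-point equation v_h = F v_h at all times s < T. -/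
open scoped BigOperators

/-!
A functional `L` on bounded functions which satisfies `L v ≤ L w + k * d` whenever `v ≤ w + d` with
`0 ≤ d` (Blackwell's condition) is `k`-Lipschitz for the supremum norm. The condition holds for
point evaluations and survives scaling, shifting by constants, and suprema and infima of families,
so it can be read off from the shape of the operator. For `k < 1` the contraction mapping principle
in `ℓ^∞` applies, and the operator preserves boundedness because its value at `0` is bounded.
-/

section BoundedFunctions

open scoped ENNReal

variable {α ι : Type*} {v w : α → ℝ} {k : ℝ}

theorem memℓp_infty_iff_exists_abs_le : Memℓp v ∞ ↔ ∃ M, ∀ x, |v x| ≤ M := by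
  simp only [memℓp_infty_iff, bddAbove_def, Set.forall_mem_range, Real.norm_eq_abs]

/-- Blackwell's condition: the functional `L` on bounded functions is monotone, and a constant
`0 ≤ d` added to its argument raises its value by at most `k * d`. Both requirements are encoded in
a single inequality. -/
def IsDiscountedMonotone (L : (α → ℝ) → ℝ) (k : ℝ) : Prop :=
  ∀ ⦃v w : α → ℝ⦄, Memℓp v ∞ → Memℓp w ∞ →
    ∀ ⦃d : ℝ⦄, 0 ≤ d → (∀ x, v x ≤ w x + d) → L v ≤ L w + k * d

namespace IsDiscountedMonotone

variable {L L₁ L₂ : (α → ℝ) → ℝ} {F : (α → ℝ) → α → ℝ} {Lᵢ : ι → (α → ℝ) → ℝ}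

theorem eval (x : α) : IsDiscountedMonotone (fun v ↦ v x) 1 := fun v w _ _ d _ hvw ↦ by
  simpa only [one_mul] using hvw x

theorem const (hk : 0 ≤ k) (r : ℝ) : IsDiscountedMonotone (fun _ : α → ℝ ↦ r) k :=
  fun _ _ _ _ _ hd _ ↦ le_add_of_nonneg_right (mul_nonneg hk hd)

theorem mono {k' : ℝ} (hL : IsDiscountedMonotone L k) (hk : k ≤ k') :
    IsDiscountedMonotone L k' := fun _ _ hv hw _ hd hvw ↦
  (hL hv hw hd hvw).trans (add_le_add_right (mul_le_mul_of_nonneg_right hk hd) _)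

theorem const_mul {a : ℝ} (ha : 0 ≤ a) (hL : IsDiscountedMonotone L k) :
    IsDiscountedMonotone (fun v ↦ a * L v) (a * k) := fun v w hv hw d hd hvw ↦
  calc a * L v ≤ a * (L w + k * d) := mul_le_mul_of_nonneg_left (hL hv hw hd hvw) ha
    _ = a * L w + a * k * d := by ring

theorem add_const (hL : IsDiscountedMonotone L k) (r : ℝ) :
    IsDiscountedMonotone (fun v ↦ L v + r) k := fun v w hv hw d hd hvw ↦ by
  linarith [hL hv hw hd hvw]

theorem sub_const (hL : IsDiscountedMonotone L k) (r : ℝ) :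
    IsDiscountedMonotone (fun v ↦ L v - r) k := by
  simpa only [sub_eq_add_neg] using hL.add_const (-r)

theorem max (h₁ : IsDiscountedMonotone L₁ k) (h₂ : IsDiscountedMonotone L₂ k) :
    IsDiscountedMonotone (fun v ↦ max (L₁ v) (L₂ v)) k := fun v w hv hw d hd hvw ↦ by
  simpa only [← max_add_add_right] using max_le_max (h₁ hv hw hd hvw) (h₂ hv hw hd hvw)

theorem min (h₁ : IsDiscountedMonotone L₁ k) (h₂ : IsDiscountedMonotone L₂ k) :
    IsDiscountedMonotone (fun v ↦ min (L₁ v) (L₂ v)) k := fun v w hv hw d hd hvw ↦ by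
  simpa only [← min_add_add_right] using min_le_min (h₁ hv hw hd hvw) (h₂ hv hw hd hvw)

theorem iSup [Nonempty ι] (hL : ∀ i, IsDiscountedMonotone (Lᵢ i) k)
    (hbdd : ∀ v, Memℓp v ∞ → BddAbove (Set.range fun i ↦ Lᵢ i v)) :
    IsDiscountedMonotone (fun v ↦ ⨆ i, Lᵢ i v) k := fun _ w hv hw _ hd hvw ↦
  ciSup_le fun i ↦ (hL i hv hw hd hvw).trans (add_le_add_left (le_ciSup (hbdd w hw) i) _)

theorem iInf [Nonempty ι] (hL : ∀ i, IsDiscountedMonotone (Lᵢ i) k)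
    (hbdd : ∀ v, Memℓp v ∞ → BddBelow (Set.range fun i ↦ Lᵢ i v)) :
    IsDiscountedMonotone (fun v ↦ ⨅ i, Lᵢ i v) k := fun v _ hv hw _ hd hvw ↦
  sub_le_iff_le_add.mp <| le_ciInf fun i ↦
    sub_le_iff_le_add.mpr <| (ciInf_le (hbdd v hv) i).trans (hL i hv hw hd hvw)

theorem abs_sub_le (hL : IsDiscountedMonotone L k) (hv : Memℓp v ∞) (hw : Memℓp w ∞) {d : ℝ}
    (hd : 0 ≤ d) (hvw : ∀ x, |v x - w x| ≤ d) : |L v - L w| ≤ k * d := by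
  have hle : L v ≤ L w + k * d :=
    hL hv hw hd fun x ↦ by linarith [(abs_le.mp (hvw x)).2]
  have hge : L w ≤ L v + k * d :=
    hL hw hv hd fun x ↦ by linarith [(abs_le.mp (hvw x)).1]
  exact abs_sub_le_iff.mpr ⟨sub_le_iff_le_add'.mpr hle, sub_le_iff_le_add'.mpr hge⟩

theorem memℓp_infty_apply (hF : ∀ x, IsDiscountedMonotone (F · x) k) (hF0 : Memℓp (F 0) ∞)
    (hv : Memℓp v ∞) : Memℓp (F v) ∞ := by
  obtain ⟨M, hM⟩ := memℓp_infty_iff_exists_abs_le.mp hv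
  have hdiff : Memℓp (F v - F 0) ∞ := memℓp_infty_iff_exists_abs_le.mpr ⟨k * |M|, fun x ↦
    (hF x).abs_sub_le hv zero_memℓp (abs_nonneg M) fun x ↦ by
      simpa only [Pi.zero_apply, sub_zero] using (hM x).trans (le_abs_self M)⟩
  simpa only [sub_add_cancel] using hdiff.add hF0

theorem existsUnique_memℓp_infty_fixedPoint (hF : ∀ x, IsDiscountedMonotone (F · x) k)
    (hk0 : 0 ≤ k) (hk1 : k < 1) (hF0 : Memℓp (F 0) ∞) :
    ∃! v : α → ℝ, Memℓp v ∞ ∧ ∀ x, v x = F v x := by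
  let Φ : lp (fun _ : α ↦ ℝ) ∞ → lp (fun _ : α ↦ ℝ) ∞ :=
    fun v ↦ ⟨F v, memℓp_infty_apply hF hF0 v.2⟩
  have hΦ : ContractingWith ⟨k, hk0⟩ Φ := by
    refine ⟨mod_cast hk1, LipschitzWith.of_dist_le_mul fun v w ↦ ?_⟩
    rw [dist_eq_norm, dist_eq_norm]
    refine lp.norm_le_of_forall_le (mul_nonneg hk0 (norm_nonneg _)) fun x ↦ ?_
    exact (hF x).abs_sub_le v.2 w.2 (norm_nonneg _)
      (lp.norm_apply_le_norm ENNReal.top_ne_zero (v - w))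
  have hfix : ∀ v : lp (fun _ : α ↦ ℝ) ∞, Function.IsFixedPt Φ v ↔ ∀ x, v x = F v x :=
    fun _ ↦ eq_comm.trans (Subtype.ext_iff.trans funext_iff)
  refine ⟨hΦ.fixedPoint, ⟨lp.memℓp _, (hfix _).mp hΦ.fixedPoint_isFixedPt⟩, ?_⟩
  rintro v ⟨hv, hvF⟩
  exact congrArg Subtype.val (hΦ.fixedPoint_unique ((hfix ⟨v, hv⟩).mpr hvF))

end IsDiscountedMonotone

end BoundedFunctions

section IsaacsOperator

open scoped ENNReal

variable {α Θ Ξ H : Type*} {a k R C D : ℝ}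
  {φ : α → Θ → α} {ψ : α → Ξ → α} {ρ : α → H → α}
  {r : α → Θ → ℝ} {c : α → Ξ → ℝ} {χ : α → H → ℝ}

/-- The one-step operator of a discounted impulse game on an arbitrary state space `α`: a control
`θ` moves the state along `φ` with reward `r` and discount `a`, while the maximizer may jump along
`ψ` at cost `c` and the minimizer along `ρ` at cost `χ`, both with discount `k`. For `approxOp` the
state is the pair of time and position. -/
noncomputable def isaacsOp (a k : ℝ) (φ : α → Θ → α) (ψ : α → Ξ → α) (ρ : α → H → α)
    (r : α → Θ → ℝ) (c : α → Ξ → ℝ) (χ : α → H → ℝ) (v : α → ℝ) (x : α) : ℝ :=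
  min
    (max (⨆ θ, (a * v (φ x θ) + r x θ)) (k * ⨆ ξ, (v (ψ x ξ) - c x ξ)))
    (k * ⨅ η, (v (ρ x η) + χ x η))

theorem isDiscountedMonotone_isaacsOp [Nonempty Θ] [Nonempty Ξ] [Nonempty H]
    (ha : 0 ≤ a) (hk : 0 ≤ k) {x : α} (hr : BddAbove (Set.range (r x)))
    (hc : BddBelow (Set.range (c x))) (hχ : BddBelow (Set.range (χ x))) :
    IsDiscountedMonotone (isaacsOp a k φ ψ ρ r c χ · x) (max a k) := by
  obtain ⟨R, hR⟩ := hr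
  obtain ⟨C, hC⟩ := hc
  obtain ⟨D, hD⟩ := hχ
  rw [mem_upperBounds, Set.forall_mem_range] at hR
  rw [mem_lowerBounds, Set.forall_mem_range] at hC hD
  have hcontrol : IsDiscountedMonotone (fun v ↦ ⨆ θ, (a * v (φ x θ) + r x θ)) (a * 1) := by
    refine .iSup (fun θ ↦ ((IsDiscountedMonotone.eval _).const_mul ha).add_const _) fun v hv ↦ ?_
    obtain ⟨M, hM⟩ := memℓp_infty_iff_exists_abs_le.mp hv
    exact ⟨a * M + R, Set.forall_mem_range.mpr fun θ ↦
      add_le_add (mul_le_mul_of_nonneg_left (abs_le.mp (hM _)).2 ha) (hR θ)⟩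
  have hmaxJump : IsDiscountedMonotone (fun v ↦ ⨆ ξ, (v (ψ x ξ) - c x ξ)) 1 := by
    refine .iSup (fun ξ ↦ (IsDiscountedMonotone.eval _).sub_const _) fun v hv ↦ ?_
    obtain ⟨M, hM⟩ := memℓp_infty_iff_exists_abs_le.mp hv
    exact ⟨M - C, Set.forall_mem_range.mpr fun ξ ↦ sub_le_sub (abs_le.mp (hM _)).2 (hC ξ)⟩
  have hminJump : IsDiscountedMonotone (fun v ↦ ⨅ η, (v (ρ x η) + χ x η)) 1 := by
    refine .iInf (fun η ↦ (IsDiscountedMonotone.eval _).add_const _) fun v hv ↦ ?_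
    obtain ⟨M, hM⟩ := memℓp_infty_iff_exists_abs_le.mp hv
    exact ⟨-M + D, Set.forall_mem_range.mpr fun η ↦ add_le_add (abs_le.mp (hM _)).1 (hD η)⟩
  have ha_le : a * 1 ≤ max a k := (mul_one a).trans_le (le_max_left a k)
  have hk_le : k * 1 ≤ max a k := (mul_one k).trans_le (le_max_right a k)
  exact ((hcontrol.mono ha_le).max ((hmaxJump.const_mul hk).mono hk_le)).min
    ((hminJump.const_mul hk).mono hk_le)

theorem isaacsOp_zero_le [Nonempty Θ] [Nonempty Ξ] (hk : 0 ≤ k) {x : α}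
    (hr : ∀ θ, r x θ ≤ R) (hc : ∀ ξ, C ≤ c x ξ) :
    isaacsOp a k φ ψ ρ r c χ 0 x ≤ max R (k * -C) := by
  simp only [isaacsOp, Pi.zero_apply, mul_zero, zero_add, zero_sub]
  exact (min_le_left _ _).trans <| max_le_max (ciSup_le hr) <|
    mul_le_mul_of_nonneg_left (ciSup_le fun ξ ↦ neg_le_neg (hc ξ)) hk

theorem le_isaacsOp_zero [Nonempty Θ] [Nonempty H] (hk : 0 ≤ k) {x : α}
    (hr : ∀ θ, |r x θ| ≤ R) (hχ : ∀ η, D ≤ χ x η) :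
    min (-R) (k * D) ≤ isaacsOp a k φ ψ ρ r c χ 0 x := by
  simp only [isaacsOp, Pi.zero_apply, mul_zero, zero_add]
  have hbdd : BddAbove (Set.range (r x)) :=
    ⟨R, Set.forall_mem_range.mpr fun θ ↦ (abs_le.mp (hr θ)).2⟩
  have hcontrol : -R ≤ ⨆ θ, r x θ :=
    le_ciSup_of_le hbdd (Classical.arbitrary Θ) (abs_le.mp (hr _)).1
  exact min_le_min (le_max_of_le_left hcontrol) (mul_le_mul_of_nonneg_left (le_ciInf hχ) hk)

theorem approx_value_function_exists_unique_general [Nonempty Θ] [Nonempty Ξ] [Nonempty H]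
    (ha0 : 0 ≤ a) (ha1 : a < 1) (hk0 : 0 ≤ k) (hk1 : k < 1)
    (hr : ∀ x θ, |r x θ| ≤ R) (hc : ∀ x ξ, C ≤ c x ξ) (hχ : ∀ x η, D ≤ χ x η)
    {S : Set α} [DecidablePred (· ∈ S)] {G : α → ℝ} {B : ℝ} (hG : ∀ x ∈ S, |G x| ≤ B) :
    ∃! v : α → ℝ, Memℓp v ∞ ∧
      ∀ x, v x = if x ∈ S then G x else isaacsOp a k φ ψ ρ r c χ v x := by
  have hmax0 : 0 ≤ max a k := le_max_of_le_left ha0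
  refine IsDiscountedMonotone.existsUnique_memℓp_infty_fixedPoint
    (F := fun v x ↦ if x ∈ S then G x else isaacsOp a k φ ψ ρ r c χ v x)
    (fun x ↦ ?_) hmax0 (max_lt ha1 hk1) ?_
  · by_cases hx : x ∈ S
    · simpa only [if_pos hx] using IsDiscountedMonotone.const hmax0 (G x)
    · simpa only [if_neg hx] using isDiscountedMonotone_isaacsOp ha0 hk0
        ⟨R, Set.forall_mem_range.mpr fun θ ↦ (abs_le.mp (hr x θ)).2⟩
        ⟨C, Set.forall_mem_range.mpr (hc x)⟩ ⟨D, Set.forall_mem_range.mpr (hχ x)⟩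
  · refine memℓp_infty_iff_exists_abs_le.mpr
      ⟨max B (max |min (-R) (k * D)| |max R (k * -C)|), fun x ↦ ?_⟩
    split_ifs with hx
    · exact le_max_of_le_left (hG x hx)
    · exact le_max_of_le_right <| abs_le_max_abs_abs (le_isaacsOp_zero hk0 (hr x) (hχ x))
        (isaacsOp_zero_le hk0 (fun θ ↦ (abs_le.mp (hr x θ)).2) (hc x))

end IsaacsOperator

/-- Theorem 4.1: with terminal condition `G` at horizon `T`, the operator
`(F_G v)(s,y) = G y` for `s ≥ T` and `(F_G v)(s,y) = (F v)(s,y)` for `s < T`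
has a unique bounded fixed point `v_h`: the approximate value function. -/
theorem approx_value_function_exists_unique
    (n l p q : ℕ) (lam h Φh : ℝ)
    (hlam : 0 < lam) (hh : 0 < h) (hh' : h < 1 / lam) (hΦ : 0 < Φh) (hΦ' : Φh < 1)
    (b : ℝ → EuclideanSpace ℝ (Fin n) → (Fin l → ℝ) → EuclideanSpace ℝ (Fin n))
    (f : ℝ → EuclideanSpace ℝ (Fin n) → (Fin l → ℝ) → ℝ)
    (gξ : ℝ → EuclideanSpace ℝ (Fin n) → (Fin p → ℝ) → EuclideanSpace ℝ (Fin n))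
    (gη : ℝ → EuclideanSpace ℝ (Fin n) → (Fin q → ℝ) → EuclideanSpace ℝ (Fin n))
    (c : ℝ → EuclideanSpace ℝ (Fin n) → (Fin p → ℝ) → ℝ)
    (χ : ℝ → EuclideanSpace ℝ (Fin n) → (Fin q → ℝ) → ℝ)
    (Mb : ℝ) (hbB : ∀ s y θ, ‖b s y θ‖ ≤ Mb)
    (Mf : ℝ) (hfB : ∀ s y θ, |f s y θ| ≤ Mf)
    (hc : ∀ s y ξ, 0 ≤ c s y ξ) (hχ : ∀ s y η, 0 ≤ χ s y η)
    (T : ℝ) (G : EuclideanSpace ℝ (Fin n) → ℝ)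
    (MG : ℝ) (hG : ∀ y, |G y| ≤ MG) :
    ∃! vh : ℝ → EuclideanSpace ℝ (Fin n) → ℝ,
      (∃ M : ℝ, ∀ s y, |vh s y| ≤ M) ∧
      ∀ s y, vh s y =
        if T ≤ s then G y else approxOp n l p q lam h Φh b f gξ gη c χ vh s y := by
  have ha0 : 0 ≤ 1 - lam * h := by linarith [(lt_div_iff₀' hlam).mp hh']
  have ha1 : 1 - lam * h < 1 := sub_lt_self 1 (mul_pos hlam hh)
  have hr : ∀ x : ℝ × EuclideanSpace ℝ (Fin n), ∀ θ, |h * f x.1 x.2 θ| ≤ h * Mf := fun x θ ↦ by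
    rw [abs_mul, abs_of_pos hh]
    exact mul_le_mul_of_nonneg_left (hfB x.1 x.2 θ) hh.le
  refine ((Equiv.curry _ _ _).existsUnique_congr fun v ↦ ?_).mp <|
    approx_value_function_exists_unique_general
      (φ := fun x θ ↦ (x.1 + h, x.2 + h • b x.1 x.2 θ))
      (ψ := fun x ξ ↦ (x.1, x.2 + gξ x.1 x.2 ξ)) (ρ := fun x η ↦ (x.1, x.2 + gη x.1 x.2 η))
      (S := {x | T ≤ x.1}) ha0 ha1 hΦ.le hΦ' hr (fun x ↦ hc x.1 x.2) (fun x ↦ hχ x.1 x.2)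
      (fun x _ ↦ hG x.2)
  simp only [memℓp_infty_iff_exists_abs_le, Prod.forall, Set.mem_ofPred_eq, Equiv.curry_apply,
    Function.curry_apply, approxOp, isaacsOp]
end

section
/- Suppose v : ℝ → X → ℝ is bounded, nonnegative, and satisfies v(s, y) = (F v)(s, y) for all (s, y). Then sup_{(s,y)} v(s, y) ≤ (sup_{(s,y,θ)} |f(s, y, θ)|) / λ. -/
open scoped BigOperators

/-! With `S = sup v` and `K = sup |f|`, dropping the minimizing player gives
`S ≤ max ((1 - λh) S + h K) (Φ S)`. If the first entry dominates, then `λ S ≤ K`; if the second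
does, then `S ≤ 0`, because `Φ < 1`: an impulse is discounted, so it never pays off on its own. -/

open Set Function

/-- The maximizing player's part of the scheme on an arbitrary state space `Z`: the better of a
controlled step of length `h`, leading from `z` to `step z θ`, and an impulse of cost `c z ξ`,
leading from `z` to `jump z ξ`. A pair (time, position) of `approxOp` is one state here. -/
noncomputable def maximizerOp {Z Θ Ξ : Type*} (lam h Φ : ℝ) (step : Z → Θ → Z) (f : Z → Θ → ℝ)
    (jump : Z → Ξ → Z) (c : Z → Ξ → ℝ) (v : Z → ℝ) (z : Z) : ℝ :=
  max (⨆ θ, ((1 - lam * h) * v (step z θ) + h * f z θ)) (Φ * ⨆ ξ, (v (jump z ξ) - c z ξ))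

theorem approxOp_le_maximizerOp {n l p q : ℕ} (lam h Φ : ℝ)
    (b : ℝ → EuclideanSpace ℝ (Fin n) → (Fin l → ℝ) → EuclideanSpace ℝ (Fin n))
    (f : ℝ → EuclideanSpace ℝ (Fin n) → (Fin l → ℝ) → ℝ)
    (gξ : ℝ → EuclideanSpace ℝ (Fin n) → (Fin p → ℝ) → EuclideanSpace ℝ (Fin n))
    (gη : ℝ → EuclideanSpace ℝ (Fin n) → (Fin q → ℝ) → EuclideanSpace ℝ (Fin n))
    (c : ℝ → EuclideanSpace ℝ (Fin n) → (Fin p → ℝ) → ℝ)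
    (χ : ℝ → EuclideanSpace ℝ (Fin n) → (Fin q → ℝ) → ℝ)
    (v : ℝ → EuclideanSpace ℝ (Fin n) → ℝ) (s : ℝ) (y : EuclideanSpace ℝ (Fin n)) :
    approxOp n l p q lam h Φ b f gξ gη c χ v s y ≤
      maximizerOp lam h Φ (fun z θ => (z.1 + h, z.2 + h • b z.1 z.2 θ)) (uncurry f)
        (fun z ξ => (z.1, z.2 + gξ z.1 z.2 ξ)) (uncurry c) (uncurry v) (s, y) :=
  min_le_left _ _

theorem le_div_of_le_max {α : Type*} [Field α] [LinearOrder α] [IsStrictOrderedRing α]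
    {lam h Φ S K : α} (hlam : 0 < lam) (hh : 0 < h) (hΦ : Φ < 1) (hK : 0 ≤ K)
    (hS : S ≤ max ((1 - lam * h) * S + h * K) (Φ * S)) : S ≤ K / lam := by
  rcases le_max_iff.mp hS with hstep | hjump
  · have hdecay : h * (S * lam) ≤ h * K := by linarith
    exact (le_div_iff₀ hlam).mpr (le_of_mul_le_mul_left hdecay hh)
  · have hS_nonpos : S ≤ 0 :=
      le_of_not_gt fun hS_pos => hjump.not_gt (mul_lt_of_lt_one_left hS_pos hΦ)
    exact hS_nonpos.trans (div_nonneg hK hlam.le)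

section StateSpace

variable {Z Θ Ξ : Type*} [Nonempty Θ] [Nonempty Ξ] {lam h Φ K : ℝ} {step : Z → Θ → Z}
  {f : Z → Θ → ℝ} {jump : Z → Ξ → Z} {c : Z → Ξ → ℝ} {v : Z → ℝ}

theorem maximizerOp_le {S : ℝ} (hh : 0 ≤ h) (hlamh : lam * h ≤ 1) (hΦ : 0 ≤ Φ)
    (hf : ∀ z θ, f z θ ≤ K) (hc : ∀ z ξ, 0 ≤ c z ξ) (hv : ∀ z, v z ≤ S) (z : Z) :
    maximizerOp lam h Φ step f jump c v z ≤ max ((1 - lam * h) * S + h * K) (Φ * S) := by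
  refine max_le_max (ciSup_le fun θ => add_le_add ?_ ?_)
    (mul_le_mul_of_nonneg_left (ciSup_le fun ξ => ?_) hΦ)
  · exact mul_le_mul_of_nonneg_left (hv _) (sub_nonneg.mpr hlamh)
  · exact mul_le_mul_of_nonneg_left (hf z θ) hh
  · exact (sub_le_self _ (hc z ξ)).trans (hv _)

theorem le_div_of_le_maximizerOp (hlam : 0 < lam) (hh : 0 < h) (hlamh : lam * h ≤ 1)
    (hΦ : 0 ≤ Φ) (hΦ' : Φ < 1) (hK : 0 ≤ K) (hf : ∀ z θ, f z θ ≤ K) (hc : ∀ z ξ, 0 ≤ c z ξ)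
    (hv : BddAbove (range v)) (hsub : ∀ z, v z ≤ maximizerOp lam h Φ step f jump c v z) (z : Z) :
    v z ≤ K / lam := by
  have : Nonempty Z := ⟨z⟩
  have hsup : ⨆ z, v z ≤ max ((1 - lam * h) * (⨆ z, v z) + h * K) (Φ * ⨆ z, v z) :=
    ciSup_le fun z => (hsub z).trans (maximizerOp_le hh.le hlamh hΦ hf hc (le_ciSup hv) z)
  exact (le_ciSup hv z).trans (le_div_of_le_max hlam hh hΦ' hK hsup)

end StateSpace

theorem approx_value_function_uniform_bound_general {T X Θ Ξ : Type*}
    [Nonempty T] [Nonempty X] [Nonempty Θ] [Nonempty Ξ] {lam h Φ : ℝ} (hlam : 0 < lam)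
    (hh : 0 < h) (hh' : h ≤ 1 / lam) (hΦ : 0 ≤ Φ) (hΦ' : Φ < 1) {step : T × X → Θ → T × X}
    {f : T → X → Θ → ℝ} {jump : T × X → Ξ → T × X} {c : T → X → Ξ → ℝ} {v : T → X → ℝ}
    {Mf : ℝ} (hf : ∀ s y θ, |f s y θ| ≤ Mf) (hc : ∀ s y ξ, 0 ≤ c s y ξ)
    {Mv : ℝ} (hv : ∀ s y, v s y ≤ Mv)
    (hsub : ∀ s y, v s y ≤
      maximizerOp lam h Φ step (uncurry f) jump (uncurry c) (uncurry v) (s, y)) :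
    (⨆ s, ⨆ y, v s y) ≤ (⨆ s, ⨆ y, ⨆ θ, |f s y θ|) / lam := by
  have hf_bdd : BddAbove (⋃ z, range fun θ => |uncurry f z θ|) :=
    ⟨Mf, by rintro _ ⟨_, ⟨z, rfl⟩, θ, rfl⟩; exact hf z.1 z.2 θ⟩
  have hK_eq : ⨆ z, ⨆ θ, |uncurry f z θ| = ⨆ s, ⨆ y, ⨆ θ, |f s y θ| :=
    ciSup_prod hf_bdd.range_iSup_of_iUnion_range
  have hK : 0 ≤ ⨆ z, ⨆ θ, |uncurry f z θ| :=
    Real.iSup_nonneg fun z => Real.iSup_nonneg fun θ => abs_nonneg (uncurry f z θ)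
  rw [← hK_eq]
  refine ciSup_le fun s => ciSup_le fun y => ?_
  exact le_div_of_le_maximizerOp hlam hh ((le_div_iff₀' hlam).mp hh') hΦ hΦ' hK
    (fun z θ => (le_abs_self _).trans (le_ciSup₂ hf_bdd z θ)) (fun z => hc z.1 z.2)
    ⟨Mv, forall_mem_range.mpr fun z => hv z.1 z.2⟩ (fun z => hsub z.1 z.2) (s, y)

/-- Uniform bound of Lemma 4.1: a bounded nonnegative fixed point `v` of the
approximation operator `F` satisfies `sup v ≤ ‖f‖_∞ / λ`. -/
theorem approx_value_function_uniform_bound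
    (n l p q : ℕ) (lam h Φh : ℝ)
    (hlam : 0 < lam) (hh : 0 < h) (hh' : h < 1 / lam) (hΦ : 0 < Φh) (hΦ' : Φh < 1)
    (b : ℝ → EuclideanSpace ℝ (Fin n) → (Fin l → ℝ) → EuclideanSpace ℝ (Fin n))
    (f : ℝ → EuclideanSpace ℝ (Fin n) → (Fin l → ℝ) → ℝ)
    (gξ : ℝ → EuclideanSpace ℝ (Fin n) → (Fin p → ℝ) → EuclideanSpace ℝ (Fin n))
    (gη : ℝ → EuclideanSpace ℝ (Fin n) → (Fin q → ℝ) → EuclideanSpace ℝ (Fin n))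
    (c : ℝ → EuclideanSpace ℝ (Fin n) → (Fin p → ℝ) → ℝ)
    (χ : ℝ → EuclideanSpace ℝ (Fin n) → (Fin q → ℝ) → ℝ)
    (Mb : ℝ) (hbB : ∀ s y θ, ‖b s y θ‖ ≤ Mb)
    (Mf : ℝ) (hfB : ∀ s y θ, |f s y θ| ≤ Mf)
    (hc : ∀ s y ξ, 0 ≤ c s y ξ) (hχ : ∀ s y η, 0 ≤ χ s y η)
    (v : ℝ → EuclideanSpace ℝ (Fin n) → ℝ)
    (Mv : ℝ) (hvB : ∀ s y, |v s y| ≤ Mv)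
    (hvPos : ∀ s y, 0 ≤ v s y)
    (hfix : ∀ s y, v s y = approxOp n l p q lam h Φh b f gξ gη c χ v s y) :
    (⨆ s : ℝ, ⨆ y : EuclideanSpace ℝ (Fin n), v s y) ≤
      (⨆ s : ℝ, ⨆ y : EuclideanSpace ℝ (Fin n), ⨆ θ : Fin l → ℝ, |f s y θ|) / lam :=
  approx_value_function_uniform_bound_general hlam hh hh'.le hΦ.le hΦ' hfB hc
    (fun s y => (abs_le.mp (hvB s y)).2)
    fun s y => (hfix s y).trans_le (approxOp_le_maximizerOp lam h Φh b f gξ gη c χ v s y)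
end

section
/- Let ε > 0 and δ₀ > 0, and suppose the bounded function v : ℝ → X → ℝ satisfies: for all s and all y₁, y₂ ∈ X with ‖y₁ − y₂‖ ≤ δ₀, |v(s, y₁) − v(s, y₂)| ≤ ε/2. Assume moreover that for all s, θ, ξ, η the maps y ↦ b(s, y, θ), y ↦ f(s, y, θ), y ↦ g_ξ(s, y, ξ), y ↦ g_η(s, y, η), y ↦ c(s, y, ξ), y ↦ χ(s, y, η) are Lipschitz with constants C_b, C_f, C_g, C_g, C_c, C_χ respectively (all strictly positive and independent of s, θ, ξ, η). Set δ := min( δ₀/(1 + C_b/λ), λε/(2·C_f), δ₀/(1 + C_g), ε/(2·C_c), ε/(2·C_χ) ). Then for every s and all y₁, y₂ ∈ X with ‖y₁ − y₂‖ ≤ δ, |(F v)(s, y₁) − (F v)(s, y₂)| ≤ ε. In particular, the modulus δ does not depend on the time step h ∈ (0, 1/λ). -/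
open scoped BigOperators

/-!
Pairs `(δ, ε)` of a modulus of continuity compose, add and scale, and pass to `max`, `min`,
suprema and infima with the same `ε`, so it is enough to follow them through the three branches of
`F`. In the continuation branch `v` contributes `(1 - λh) ε / 2` and `h f` contributes
`λh ε / 2`, which add up to `ε / 2`; the drift step `y ↦ y + h b` has Lipschitz constant at most
`1 + h C_b ≤ 1 + C_b / λ`. Both final bounds are free of `h`. In the two intervention branches
`v` and the cost contribute `ε / 2` each, and the factor `Φh` only shrinks the sum.
-/

/-- One pair of a modulus of continuity: points at distance at most `δ` have images at distance at
most `ε`. Both `δ` and `ε` are arbitrary reals, so the condition is void for `δ < 0`. -/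
def HasModulus {α β : Type*} [PseudoMetricSpace α] [PseudoMetricSpace β]
    (δ ε : ℝ) (u : α → β) : Prop :=
  ∀ x y, dist x y ≤ δ → dist (u x) (u y) ≤ ε

theorem hasModulus_iff_norm_sub {E F : Type*} [SeminormedAddCommGroup E]
    [SeminormedAddCommGroup F] {δ ε : ℝ} {u : E → F} :
    HasModulus δ ε u ↔ ∀ x y, ‖x - y‖ ≤ δ → ‖u x - u y‖ ≤ ε := by
  simp only [HasModulus, dist_eq_norm_sub]

namespace HasModulus

section Metric

variable {α β γ : Type*} [PseudoMetricSpace α] [PseudoMetricSpace β] [PseudoMetricSpace γ]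
  {δ ε ε' ρ : ℝ}

protected theorem id : HasModulus δ δ (fun x : α => x) :=
  fun _ _ hxy => hxy

theorem mono_right {u : α → β} (hu : HasModulus δ ε u) (h : ε ≤ ε') : HasModulus δ ε' u :=
  fun x y hxy => (hu x y hxy).trans h

protected theorem comp {u : β → γ} {φ : α → β} (hu : HasModulus ρ ε u) (hφ : HasModulus δ ρ φ) :
    HasModulus δ ε (fun x => u (φ x)) :=
  fun x y hxy => hu _ _ (hφ x y hxy)

protected theorem max {u w : α → ℝ} (hu : HasModulus δ ε u) (hw : HasModulus δ ε w) :
    HasModulus δ ε (fun x => max (u x) (w x)) :=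
  fun x y hxy => (abs_max_sub_max_le_max _ _ _ _).trans (max_le (hu x y hxy) (hw x y hxy))

protected theorem min {u w : α → ℝ} (hu : HasModulus δ ε u) (hw : HasModulus δ ε w) :
    HasModulus δ ε (fun x => min (u x) (w x)) :=
  fun x y hxy => (abs_min_sub_min_le_max _ _ _ _).trans (max_le (hu x y hxy) (hw x y hxy))

protected theorem iSup {ι : Type*} [Nonempty ι] {u : ι → α → ℝ}
    (hu : ∀ i, HasModulus δ ε (u i)) (hbdd : ∀ x, BddAbove (Set.range fun i => u i x)) :
    HasModulus δ ε (fun x => ⨆ i, u i x) := by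
  have iSup_le_add : ∀ x y, dist x y ≤ δ → ⨆ i, u i x ≤ (⨆ i, u i y) + ε := fun x y hxy =>
    ciSup_le fun i => calc
      u i x ≤ u i y + ε := by linarith [(abs_le.1 (hu i x y hxy)).2]
      _ ≤ (⨆ i, u i y) + ε := by gcongr; exact le_ciSup (hbdd y) i
  intro x y hxy
  have hyx : dist y x ≤ δ := by rwa [dist_comm]
  exact abs_sub_le_iff.2
    ⟨sub_left_le_of_le_add (iSup_le_add x y hxy), sub_left_le_of_le_add (iSup_le_add y x hyx)⟩

end Metric

section Normed

variable {α E F : Type*} [PseudoMetricSpace α] [SeminormedAddCommGroup E]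
  [SeminormedAddCommGroup F] {δ ε ε₁ ε₂ : ℝ}

theorem of_norm_sub_le_mul {C : ℝ} {u : E → F} (hC : 0 ≤ C)
    (hu : ∀ x y, ‖u x - u y‖ ≤ C * ‖x - y‖) : HasModulus δ (C * δ) u :=
  hasModulus_iff_norm_sub.2 fun x y hxy => (hu x y).trans (mul_le_mul_of_nonneg_left hxy hC)

protected theorem add {u w : α → F} (hu : HasModulus δ ε₁ u) (hw : HasModulus δ ε₂ w) :
    HasModulus δ (ε₁ + ε₂) (fun x => u x + w x) :=
  fun x y hxy => dist_add_add_le_of_le (hu x y hxy) (hw x y hxy)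

protected theorem neg {u : α → F} (hu : HasModulus δ ε u) : HasModulus δ ε (fun x => -u x) :=
  fun x y hxy => (dist_neg_neg _ _).trans_le (hu x y hxy)

protected theorem sub {u w : α → F} (hu : HasModulus δ ε₁ u) (hw : HasModulus δ ε₂ w) :
    HasModulus δ (ε₁ + ε₂) (fun x => u x - w x) :=
  fun x y hxy => dist_sub_sub_le_of_le (hu x y hxy) (hw x y hxy)

variable {𝕜 : Type*} [NormedField 𝕜] [NormedSpace 𝕜 F] {u : α → F}

protected theorem const_smul (a : 𝕜) (hu : HasModulus δ ε u) :
    HasModulus δ (‖a‖ * ε) (fun x => a • u x) :=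
  fun x y hxy => (dist_smul₀ a _ _).trans_le <|
    mul_le_mul_of_nonneg_left (hu x y hxy) (norm_nonneg a)

theorem const_smul_of_norm_le_one {a : 𝕜} (ha : ‖a‖ ≤ 1) (hε : 0 ≤ ε) (hu : HasModulus δ ε u) :
    HasModulus δ ε (fun x => a • u x) :=
  (hu.const_smul a).mono_right (mul_le_of_le_one_left hε ha)

end Normed

end HasModulus

section Operators

variable {E Θ Ξ Η : Type*} [SeminormedAddCommGroup E]

/-- The continuation branch of `F` at a fixed time: an explicit Euler step of the discounted control
problem with drift `b` and running payoff `f`, where `u` is the value at the next time. -/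
noncomputable def continuationOp [NormedSpace ℝ E] (lam h : ℝ) (b : E → Θ → E) (f : E → Θ → ℝ)
    (u : E → ℝ) (y : E) : ℝ :=
  ⨆ θ, ((1 - lam * h) * u (y + h • b y θ) + h * f y θ)

/-- The maximiser's impulse operator: the best value after a jump `g y ξ` at the cost `c y ξ`. -/
noncomputable def supInterventionOp (g : E → Ξ → E) (c : E → Ξ → ℝ) (u : E → ℝ) (y : E) : ℝ :=
  ⨆ ξ, (u (y + g y ξ) - c y ξ)

/-- The minimiser's impulse operator: the least value after a jump `g y η`, whose cost `χ y η` is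
paid to the maximiser. -/
noncomputable def infInterventionOp (g : E → Η → E) (χ : E → Η → ℝ) (u : E → ℝ) (y : E) : ℝ :=
  ⨅ η, (u (y + g y η) + χ y η)

/-- The approximation operator `F` over a seminormed state space and arbitrary control sets;
`approxOp` is the case of Euclidean states and controls. -/
noncomputable def discreteHJBIOp [NormedSpace ℝ E] (lam h Φ : ℝ) (b : ℝ → E → Θ → E)
    (f : ℝ → E → Θ → ℝ) (gξ : ℝ → E → Ξ → E) (gη : ℝ → E → Η → E) (c : ℝ → E → Ξ → ℝ)
    (χ : ℝ → E → Η → ℝ) (v : ℝ → E → ℝ) (s : ℝ) (y : E) : ℝ :=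
  min (max (continuationOp lam h (b s) (f s) (v (s + h)) y)
      (Φ * supInterventionOp (gξ s) (c s) (v s) y))
    (Φ * infInterventionOp (gη s) (χ s) (v s) y)

theorem infInterventionOp_eq_neg_supInterventionOp_neg (g : E → Η → E) (χ : E → Η → ℝ)
    (u : E → ℝ) (y : E) :
    infInterventionOp g χ u y = -supInterventionOp g χ (fun x => -u x) y := by
  rw [infInterventionOp, supInterventionOp, iInf, iSup, ← Real.sInf_neg, ← Set.image_neg_eq_neg,
    ← Set.range_comp]
  congr! 2
  ext η
  simp only [Function.comp_apply]
  ring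

variable {δ δ₀ ε ε₁ ε₂ ρ : ℝ} {u : E → ℝ}

theorem HasModulus.comp_add_of_add_le {g : E → E} (hu : HasModulus δ₀ ε u)
    (hg : HasModulus δ ρ g) (hρ : δ + ρ ≤ δ₀) : HasModulus δ ε (fun y => u (y + g y)) :=
  hu.comp ((HasModulus.id.add hg).mono_right hρ)

protected theorem HasModulus.continuationOp [NormedSpace ℝ E] [Nonempty Θ] {lam h : ℝ}
    {b : E → Θ → E} {f : E → Θ → ℝ} (hu : HasModulus δ₀ ε u) (hu_bdd : BddAbove (Set.range u))
    (hf_bdd : ∀ y, BddAbove (Set.range (f y))) (hh : 0 ≤ h) (hlamh : lam * h ≤ 1)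
    (hb : ∀ θ, HasModulus δ ρ (b · θ)) (hρ : δ + h * ρ ≤ δ₀)
    (hf : ∀ θ, HasModulus δ (lam * ε) (f · θ)) :
    HasModulus δ ε (continuationOp lam h b f u) := by
  have hw : 0 ≤ 1 - lam * h := sub_nonneg.2 hlamh
  refine HasModulus.iSup (fun θ => ?_) fun y => ?_
  · have hdrift : HasModulus δ (h * ρ) (fun y => h • b y θ) := by
      simpa only [Real.norm_of_nonneg hh] using (hb θ).const_smul h
    have hsum := ((hu.comp_add_of_add_le hdrift hρ).const_smul (1 - lam * h)).add
      ((hf θ).const_smul h)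
    refine hsum.mono_right (le_of_eq ?_)
    rw [Real.norm_of_nonneg hw, Real.norm_of_nonneg hh]
    ring
  · obtain ⟨M, hM⟩ := hu_bdd
    obtain ⟨N, hN⟩ := hf_bdd y
    refine ⟨(1 - lam * h) * M + h * N, Set.forall_mem_range.2 fun θ => ?_⟩
    gcongr
    exacts [hM (Set.mem_range_self _), hN (Set.mem_range_self _)]

protected theorem HasModulus.supInterventionOp [Nonempty Ξ] {g : E → Ξ → E} {c : E → Ξ → ℝ}
    (hu : HasModulus δ₀ ε₁ u) (hu_bdd : BddAbove (Set.range u))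
    (hc_bdd : ∀ y, BddBelow (Set.range (c y))) (hg : ∀ ξ, HasModulus δ ρ (g · ξ))
    (hρ : δ + ρ ≤ δ₀) (hc : ∀ ξ, HasModulus δ ε₂ (c · ξ)) :
    HasModulus δ (ε₁ + ε₂) (supInterventionOp g c u) := by
  refine HasModulus.iSup (fun ξ => (hu.comp_add_of_add_le (hg ξ) hρ).sub (hc ξ)) fun y => ?_
  obtain ⟨M, hM⟩ := hu_bdd
  obtain ⟨N, hN⟩ := hc_bdd y
  exact ⟨M - N, Set.forall_mem_range.2 fun ξ =>
    sub_le_sub (hM (Set.mem_range_self _)) (hN (Set.mem_range_self _))⟩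

protected theorem HasModulus.infInterventionOp [Nonempty Η] {g : E → Η → E} {χ : E → Η → ℝ}
    (hu : HasModulus δ₀ ε₁ u) (hu_bdd : BddBelow (Set.range u))
    (hχ_bdd : ∀ y, BddBelow (Set.range (χ y))) (hg : ∀ η, HasModulus δ ρ (g · η))
    (hρ : δ + ρ ≤ δ₀) (hχ : ∀ η, HasModulus δ ε₂ (χ · η)) :
    HasModulus δ (ε₁ + ε₂) (infInterventionOp g χ u) := by
  have hneg_bdd : BddAbove (Set.range fun x => -u x) := hu_bdd.range_neg
  have hsup := hu.neg.supInterventionOp hneg_bdd hχ_bdd hg hρ hχ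
  simpa only [← infInterventionOp_eq_neg_supInterventionOp_neg] using hsup.neg

variable [NormedSpace ℝ E] [Nonempty Θ] [Nonempty Ξ] [Nonempty Η] {lam h Φ : ℝ}
  {b : ℝ → E → Θ → E} {f : ℝ → E → Θ → ℝ} {gξ : ℝ → E → Ξ → E} {gη : ℝ → E → Η → E}
  {c : ℝ → E → Ξ → ℝ} {χ : ℝ → E → Η → ℝ} {v : ℝ → E → ℝ}

theorem hasModulus_discreteHJBIOp {ρb ρg s : ℝ} (hh : 0 ≤ h) (hlamh : lam * h ≤ 1)
    (hΦ : |Φ| ≤ 1) (hε : 0 ≤ ε)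
    (hf_bdd : ∀ y, BddAbove (Set.range (f s y)))
    (hc_bdd : ∀ y, BddBelow (Set.range (c s y))) (hχ_bdd : ∀ y, BddBelow (Set.range (χ s y)))
    (hv_bdd : ∀ t, Bornology.IsBounded (Set.range (v t)))
    (hv : ∀ t, HasModulus δ₀ (ε / 2) (v t))
    (hb : ∀ θ, HasModulus δ ρb (b s · θ)) (hρb : δ + h * ρb ≤ δ₀)
    (hf : ∀ θ, HasModulus δ (lam * (ε / 2)) (f s · θ))
    (hgξ : ∀ ξ, HasModulus δ ρg (gξ s · ξ)) (hgη : ∀ η, HasModulus δ ρg (gη s · η))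
    (hρg : δ + ρg ≤ δ₀)
    (hc : ∀ ξ, HasModulus δ (ε / 2) (c s · ξ)) (hχ : ∀ η, HasModulus δ (ε / 2) (χ s · η)) :
    HasModulus δ ε (discreteHJBIOp lam h Φ b f gξ gη c χ v s) := by
  have hcont : HasModulus δ ε (continuationOp lam h (b s) (f s) (v (s + h))) :=
    ((hv _).continuationOp (hv_bdd _).bddAbove hf_bdd hh hlamh hb hρb hf).mono_right
      (half_le_self hε)
  have hsup : HasModulus δ ε (supInterventionOp (gξ s) (c s) (v s)) := by
    simpa only [add_halves] using
      (hv s).supInterventionOp (hv_bdd s).bddAbove hc_bdd hgξ hρg hc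
  have hinf : HasModulus δ ε (infInterventionOp (gη s) (χ s) (v s)) := by
    simpa only [add_halves] using
      (hv s).infInterventionOp (hv_bdd s).bddBelow hχ_bdd hgη hρg hχ
  exact (hcont.max (hsup.const_smul_of_norm_le_one (a := Φ) hΦ hε)).min
    (hinf.const_smul_of_norm_le_one (a := Φ) hΦ hε)

theorem approxOp_equicontinuity_general {Cb Cf Cg Cc Cχ : ℝ}
    (hlam : 0 < lam) (hh : 0 ≤ h) (hh' : h ≤ 1 / lam) (hΦ : |Φ| ≤ 1)
    (hf_bdd : ∀ s y, BddAbove (Set.range (f s y)))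
    (hc_bdd : ∀ s y, BddBelow (Set.range (c s y)))
    (hχ_bdd : ∀ s y, BddBelow (Set.range (χ s y)))
    (hv_bdd : ∀ s, Bornology.IsBounded (Set.range (v s)))
    (hε : 0 ≤ ε) (hδ₀ : 0 ≤ δ₀) (hv : ∀ s, HasModulus δ₀ (ε / 2) (v s))
    (hCb : 0 ≤ Cb) (hCf : 0 < Cf) (hCg : 0 ≤ Cg) (hCc : 0 < Cc) (hCχ : 0 < Cχ)
    (hb : ∀ s θ y₁ y₂, ‖b s y₁ θ - b s y₂ θ‖ ≤ Cb * ‖y₁ - y₂‖)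
    (hf : ∀ s θ y₁ y₂, |f s y₁ θ - f s y₂ θ| ≤ Cf * ‖y₁ - y₂‖)
    (hgξ : ∀ s ξ y₁ y₂, ‖gξ s y₁ ξ - gξ s y₂ ξ‖ ≤ Cg * ‖y₁ - y₂‖)
    (hgη : ∀ s η y₁ y₂, ‖gη s y₁ η - gη s y₂ η‖ ≤ Cg * ‖y₁ - y₂‖)
    (hc : ∀ s ξ y₁ y₂, |c s y₁ ξ - c s y₂ ξ| ≤ Cc * ‖y₁ - y₂‖)
    (hχ : ∀ s η y₁ y₂, |χ s y₁ η - χ s y₂ η| ≤ Cχ * ‖y₁ - y₂‖) (s : ℝ) :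
    HasModulus (min (δ₀ / (1 + Cb / lam)) (min (lam * ε / (2 * Cf))
      (min (δ₀ / (1 + Cg)) (min (ε / (2 * Cc)) (ε / (2 * Cχ)))))) ε
      (discreteHJBIOp lam h Φ b f gξ gη c χ v s) := by
  generalize hδ : min (δ₀ / (1 + Cb / lam)) _ = δ
  have hδ_nonneg : 0 ≤ δ := by rw [← hδ]; positivity
  obtain ⟨hδb, hδf, hδg, hδc, hδχ⟩ := by simpa only [le_min_iff] using hδ.ge
  rw [le_div_iff₀ (by positivity)] at hδb hδf hδg hδc hδχ
  have hlamh : lam * h ≤ 1 := by rwa [mul_comm, ← le_div_iff₀ hlam]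
  have hdrift : δ + h * (Cb * δ) ≤ δ₀ := calc
    δ + h * (Cb * δ) ≤ δ + 1 / lam * (Cb * δ) := by gcongr
    _ = δ * (1 + Cb / lam) := by ring
    _ ≤ δ₀ := hδb
  exact hasModulus_discreteHJBIOp hh hlamh hΦ hε (hf_bdd s) (hc_bdd s) (hχ_bdd s) hv_bdd hv
    (fun θ => .of_norm_sub_le_mul hCb (hb s θ)) hdrift
    (fun θ => (HasModulus.of_norm_sub_le_mul hCf.le (hf s θ)).mono_right (by linarith))
    (fun ξ => .of_norm_sub_le_mul hCg (hgξ s ξ)) (fun η => .of_norm_sub_le_mul hCg (hgη s η))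
    (by linarith)
    (fun ξ => (HasModulus.of_norm_sub_le_mul hCc.le (hc s ξ)).mono_right (by linarith))
    (fun η => (HasModulus.of_norm_sub_le_mul hCχ.le (hχ s η)).mono_right (by linarith))

end Operators

/-- One-step equicontinuity propagation underlying Lemma 4.1: if `v` has modulus of
continuity `(δ₀, ε/2)` in the state variable and the data are Lipschitz in the state,
then `F v` has modulus `(δ, ε)` with
`δ = min(δ₀/(1 + C_b/λ), λε/(2C_f), δ₀/(1 + C_g), ε/(2C_c), ε/(2C_χ))`,
a modulus independent of the time step `h ∈ (0, 1/λ)`. -/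
theorem approxOp_equicontinuity
    (n l p q : ℕ) (lam h Φh : ℝ)
    (hlam : 0 < lam) (hh : 0 < h) (hh' : h < 1 / lam) (hΦ : 0 < Φh) (hΦ' : Φh < 1)
    (b : ℝ → EuclideanSpace ℝ (Fin n) → (Fin l → ℝ) → EuclideanSpace ℝ (Fin n))
    (f : ℝ → EuclideanSpace ℝ (Fin n) → (Fin l → ℝ) → ℝ)
    (gξ : ℝ → EuclideanSpace ℝ (Fin n) → (Fin p → ℝ) → EuclideanSpace ℝ (Fin n))
    (gη : ℝ → EuclideanSpace ℝ (Fin n) → (Fin q → ℝ) → EuclideanSpace ℝ (Fin n))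
    (c : ℝ → EuclideanSpace ℝ (Fin n) → (Fin p → ℝ) → ℝ)
    (χ : ℝ → EuclideanSpace ℝ (Fin n) → (Fin q → ℝ) → ℝ)
    (Mb : ℝ) (hbB : ∀ s y θ, ‖b s y θ‖ ≤ Mb)
    (Mf : ℝ) (hfB : ∀ s y θ, |f s y θ| ≤ Mf)
    (hc : ∀ s y ξ, 0 ≤ c s y ξ) (hχ : ∀ s y η, 0 ≤ χ s y η)
    (v : ℝ → EuclideanSpace ℝ (Fin n) → ℝ)
    (Mv : ℝ) (hvB : ∀ s y, |v s y| ≤ Mv)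
    (ε δ₀ : ℝ) (hε : 0 < ε) (hδ₀ : 0 < δ₀)
    (hvMod : ∀ (s : ℝ) (y₁ y₂ : EuclideanSpace ℝ (Fin n)),
      ‖y₁ - y₂‖ ≤ δ₀ → |v s y₁ - v s y₂| ≤ ε / 2)
    (Cb Cf Cg Cc Cχ : ℝ)
    (hCb : 0 < Cb) (hCf : 0 < Cf) (hCg : 0 < Cg) (hCc : 0 < Cc) (hCχ : 0 < Cχ)
    (hbLip : ∀ (s : ℝ) (θ : Fin l → ℝ) (y₁ y₂ : EuclideanSpace ℝ (Fin n)),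
      ‖b s y₁ θ - b s y₂ θ‖ ≤ Cb * ‖y₁ - y₂‖)
    (hfLip : ∀ (s : ℝ) (θ : Fin l → ℝ) (y₁ y₂ : EuclideanSpace ℝ (Fin n)),
      |f s y₁ θ - f s y₂ θ| ≤ Cf * ‖y₁ - y₂‖)
    (hgξLip : ∀ (s : ℝ) (ξ : Fin p → ℝ) (y₁ y₂ : EuclideanSpace ℝ (Fin n)),
      ‖gξ s y₁ ξ - gξ s y₂ ξ‖ ≤ Cg * ‖y₁ - y₂‖)
    (hgηLip : ∀ (s : ℝ) (η : Fin q → ℝ) (y₁ y₂ : EuclideanSpace ℝ (Fin n)),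
      ‖gη s y₁ η - gη s y₂ η‖ ≤ Cg * ‖y₁ - y₂‖)
    (hcLip : ∀ (s : ℝ) (ξ : Fin p → ℝ) (y₁ y₂ : EuclideanSpace ℝ (Fin n)),
      |c s y₁ ξ - c s y₂ ξ| ≤ Cc * ‖y₁ - y₂‖)
    (hχLip : ∀ (s : ℝ) (η : Fin q → ℝ) (y₁ y₂ : EuclideanSpace ℝ (Fin n)),
      |χ s y₁ η - χ s y₂ η| ≤ Cχ * ‖y₁ - y₂‖) :
    ∀ (s : ℝ) (y₁ y₂ : EuclideanSpace ℝ (Fin n)),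
      ‖y₁ - y₂‖ ≤ min (δ₀ / (1 + Cb / lam)) (min (lam * ε / (2 * Cf))
        (min (δ₀ / (1 + Cg)) (min (ε / (2 * Cc)) (ε / (2 * Cχ))))) →
      |approxOp n l p q lam h Φh b f gξ gη c χ v s y₁ -
        approxOp n l p q lam h Φh b f gξ gη c χ v s y₂| ≤ ε := fun s =>
  hasModulus_iff_norm_sub.1 <| approxOp_equicontinuity_general hlam hh.le hh'.le
    ((abs_of_pos hΦ).trans_le hΦ'.le)
    (fun s y => ⟨Mf, Set.forall_mem_range.2 fun θ => (abs_le.1 (hfB s y θ)).2⟩)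
    (fun s y => ⟨0, Set.forall_mem_range.2 (hc s y)⟩)
    (fun s y => ⟨0, Set.forall_mem_range.2 (hχ s y)⟩)
    (fun s => isBounded_iff_forall_norm_le.2 ⟨Mv, Set.forall_mem_range.2 (hvB s)⟩)
    hε.le hδ₀.le (fun s => hasModulus_iff_norm_sub.2 (hvMod s)) hCb.le hCf hCg.le hCc hCχ
    hbLip hfLip hgξLip hgηLip hcLip hχLip s
end

section
/- Let X = EuclideanSpace ℝ (Fin n), let T > 0, let u, v : ℝ × X → ℝ be bounded and uniformly continuous, and let 0 < μ ≤ 1. For ε, β > 0 define Γ(t, x, y) = μ·u(t, x) − v(t, y) − ‖x − y‖²/ε² − β·(‖x‖² + ‖y‖²) on [0, T] × X × X. Then for every η > 0 there exist ε₀ > 0 and β₀ > 0 such that for all 0 < ε ≤ ε₀ and 0 < β ≤ β₀, every global maximum point (t_m, x_m, y_m) of Γ over [0, T] × X × X satisfies ‖x_m − y_m‖²/ε² + β·(‖x_m‖² + ‖y_m‖²) ≤ η. -/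
/-!
Write `f = μ u`, `g = v` and `ψ = ‖·‖ ^ 2`. Fix `(j, z)` at which `f j z - g j z` is within `η / 4`
of its supremum, and take `2 β ψ z ≤ η / 4`. At a maximum point `(i, x, y)` of the doubled
function, comparison with `(j, z, z)` bounds the penalty by `(f i x - g i y) - (f j z - g j z) + 2
β ψ z`. Boundedness makes this `O(1)`, so `dist x y = O(ε)`. The equicontinuity of `g` then allows
`g i y` to be replaced by `g i x` at the cost of `η / 2`, after which the choice of `(j, z)` turns
the same bound into `η`.
-/

open Filter Set

lemma exists_forall_lt_add_of_bddAbove {α : Type*} [Nonempty α] {F : α → ℝ}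
    (hF : BddAbove (range F)) {η : ℝ} (hη : 0 < η) : ∃ a, ∀ b, F b < F a + η := by
  obtain ⟨a, ha⟩ := exists_lt_of_lt_ciSup (sub_lt_self (⨆ a, F a) hη)
  exact ⟨a, fun b => (le_ciSup hF b).trans_lt (sub_lt_iff_lt_add.mp ha)⟩

lemma uniformEquicontinuous_curry {α β γ : Type*} [UniformSpace α] [UniformSpace β]
    [UniformSpace γ] {v : α × β → γ} (hv : UniformContinuous v) :
    UniformEquicontinuous (Function.curry v) := by
  intro V hV
  have hpre := hv hV
  rw [uniformity_prod_eq_prod, mem_map, mem_map] at hpre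
  obtain ⟨A, hA, B, hB, hAB⟩ := mem_prod_iff.mp hpre
  filter_upwards [hB] with p hp a
  exact @hAB ((a, a), p) ⟨refl_mem_uniformity hA, hp⟩

/-- The penalty of the doubling-of-variables method: its first term forces `x` and `y` together
as `ε → 0`, and its second term confines them through the weight `ψ`, which is `‖·‖ ^ 2` in the
classical case. -/
noncomputable def doublingPenalty {E : Type*} [PseudoMetricSpace E] (ψ : E → ℝ) (ε β : ℝ)
    (x y : E) : ℝ :=
  dist x y ^ 2 / ε ^ 2 + β * (ψ x + ψ y)

section DoublingPenalty

variable {ι E : Type*} [PseudoMetricSpace E] {f g : ι → E → ℝ} {ψ : E → ℝ} {ε β : ℝ}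

lemma doublingPenalty_self (x : E) : doublingPenalty ψ ε β x x = 2 * β * ψ x := by
  simp only [doublingPenalty, dist_self]
  ring

lemma dist_le_of_doublingPenalty_le (hψ : ∀ x, 0 ≤ ψ x) (hε : 0 < ε) (hβ : 0 ≤ β)
    {x y : E} {K : ℝ} (h : doublingPenalty ψ ε β x y ≤ K) : dist x y ≤ √K * ε := by
  have hconfine : 0 ≤ β * (ψ x + ψ y) := mul_nonneg hβ (add_nonneg (hψ x) (hψ y))
  have hsq : (dist x y / ε) ^ 2 ≤ K := by
    rw [div_pow]
    exact (le_add_of_nonneg_right hconfine).trans h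
  exact (div_le_iff₀ hε).mp (Real.le_sqrt_of_sq_le hsq)

lemma doublingPenalty_le_of_forall_le {i : ι} {x y : E}
    (hmax : ∀ j x' y', f j x' - g j y' - doublingPenalty ψ ε β x' y' ≤
      f i x - g i y - doublingPenalty ψ ε β x y) (j : ι) (z : E) :
    doublingPenalty ψ ε β x y ≤ (f i x - g i y) - (f j z - g j z) + 2 * β * ψ z := by
  have hdiag := hmax j z z
  rw [doublingPenalty_self] at hdiag
  linarith

theorem doubling_penalization_estimate_general [Nonempty ι] [Nonempty E] {C : ℝ}
    (hfg : ∀ i x y, f i x - g i y ≤ C) (hg : UniformEquicontinuous g)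
    (hψ : ∀ x, 0 ≤ ψ x) {η : ℝ} (hη : 0 < η) :
    ∃ ε₀ > 0, ∃ β₀ > 0, ∀ ε β : ℝ, 0 < ε → ε ≤ ε₀ → 0 < β → β ≤ β₀ →
      ∀ i x y,
        (∀ j x' y', f j x' - g j y' - doublingPenalty ψ ε β x' y' ≤
          f i x - g i y - doublingPenalty ψ ε β x y) →
        doublingPenalty ψ ε β x y ≤ η := by
  have hdiag : BddAbove (range fun a : ι × E => f a.1 a.2 - g a.1 a.2) :=
    ⟨C, forall_mem_range.mpr fun a => hfg a.1 a.2 a.2⟩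
  obtain ⟨⟨j, z⟩, hjz⟩ := exists_forall_lt_add_of_bddAbove hdiag (show 0 < η / 4 by positivity)
  simp only [Prod.forall] at hjz
  obtain ⟨δ, hδ, hgδ⟩ := Metric.uniformEquicontinuous_iff.mp hg (η / 2) (by positivity)
  have hψz := hψ z
  set K := C - (f j z - g j z) + η / 4 with hK
  refine ⟨δ / (√K + 1), by positivity, η / (8 * (ψ z + 1)), by positivity, ?_⟩
  intro ε β hε hεδ hβ hβη i x y hmax
  have hbound := doublingPenalty_le_of_forall_le hmax j z
  have hanchor : 2 * β * ψ z ≤ η / 4 := by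
    rw [le_div_iff₀ (by positivity)] at hβη
    linarith
  have hpenalty : doublingPenalty ψ ε β x y ≤ K := by linarith [hfg i x y]
  have hdist : dist x y < δ := calc
    dist x y ≤ √K * ε := dist_le_of_doublingPenalty_le hψ hε hβ.le hpenalty
    _ < (√K + 1) * ε := by gcongr; exact lt_add_one _
    _ ≤ δ := (le_div_iff₀' (by positivity)).mp hεδ
  have hgxy : g i x - g i y < η / 2 := (le_abs_self _).trans_lt (hgδ x y hdist i)
  linarith [hjz i x]

end DoublingPenalty

/-- Penalization estimate (equation (3.10)) in Step 2 of the proof of the comparison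
theorem: at any global maximum point of the doubling-of-variables test function
`Γ(t,x,y) = μ·u(t,x) - v(t,y) - ‖x-y‖²/ε² - β(‖x‖² + ‖y‖²)` over `[0,T] × X × X`,
the penalty terms can be made arbitrarily small uniformly for small `ε` and `β`. -/
theorem doubling_penalization_estimate
    (n : ℕ) (T : ℝ) (hT : 0 < T)
    (u v : ℝ × EuclideanSpace ℝ (Fin n) → ℝ)
    (Mu : ℝ) (hub : ∀ p, |u p| ≤ Mu) (Mv : ℝ) (hvb : ∀ p, |v p| ≤ Mv)
    (hu : UniformContinuous u) (hv : UniformContinuous v)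
    (μ : ℝ) (hμ0 : 0 < μ) (hμ1 : μ ≤ 1) :
    ∀ η : ℝ, 0 < η → ∃ ε₀ > (0 : ℝ), ∃ β₀ > (0 : ℝ), ∀ ε β : ℝ,
      0 < ε → ε ≤ ε₀ → 0 < β → β ≤ β₀ →
      ∀ tm ∈ Set.Icc (0 : ℝ) T, ∀ xm ym : EuclideanSpace ℝ (Fin n),
        (∀ t ∈ Set.Icc (0 : ℝ) T, ∀ x y : EuclideanSpace ℝ (Fin n),
          μ * u (t, x) - v (t, y) - ‖x - y‖ ^ 2 / ε ^ 2 - β * (‖x‖ ^ 2 + ‖y‖ ^ 2) ≤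
          μ * u (tm, xm) - v (tm, ym) - ‖xm - ym‖ ^ 2 / ε ^ 2 -
            β * (‖xm‖ ^ 2 + ‖ym‖ ^ 2)) →
        ‖xm - ym‖ ^ 2 / ε ^ 2 + β * (‖xm‖ ^ 2 + ‖ym‖ ^ 2) ≤ η := by
  intro η hη
  have : Nonempty (Icc 0 T) := (nonempty_Icc.mpr hT.le).to_subtype
  have hbdd (t : Icc 0 T) (x y) : μ * u (t, x) - v (t, y) ≤ μ * Mu - -Mv :=
    sub_le_sub (mul_le_mul_of_nonneg_left (le_of_abs_le (hub _)) hμ0.le)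
      (neg_le_of_abs_le (hvb _))
  have hequi : UniformEquicontinuous fun (t : Icc 0 T) y => v (t, y) :=
    (uniformEquicontinuous_curry hv).comp _
  simpa [doublingPenalty, dist_eq_norm, ← sub_sub] using
    doubling_penalization_estimate_general hbdd hequi (fun x => sq_nonneg ‖x‖) hη
end
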